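/- For every even k ≥ 2 and every real ε > 0, there exists a k-typed Schelling game in which every type contains the same number of stubborn agents, which admits an equilibrium assignment, and in which there is an assignment v* such that SW(v*) ≥ (3 − ε) · SW(v) for every equilibrium assignment v; consequently the price of stability of such games is at least 3. -/

import Mathlib

/-- A (social) Schelling game: agents `A`, of which `strategic` are the strategic
ones (the rest being stubborn), a social network `net` on the agents (the friends
of an agent are her neighbors in `net`, all other agents are her enemies), a
topology `top` on the set of locations `V`, and the preferred locations `loc`
of the (stubborn) agents. -/
structure SchellingGame (A V : Type) where
  strategic : Finset A
  net : SimpleGraph A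
  top : SimpleGraph V
  loc : A → V

namespace SchellingGame

variable {A V : Type} [Fintype A] [DecidableEq A] [Fintype V] [DecidableEq V]

/-- There are `n ≥ 2` agents, strictly more locations than agents, and the
stubborn agents have pairwise distinct preferred locations. -/
def WellFormed (g : SchellingGame A V) : Prop :=
  2 ≤ Fintype.card A ∧ Fintype.card A < Fintype.card V ∧
    Set.InjOn g.loc ↑(g.strategicᶜ)

/-- An assignment is an injective placement of the agents on the nodes of the
topology which places every stubborn agent at her preferred location. -/
def IsAssignment (g : SchellingGame A V) (v : A → V) : Prop :=
  Function.Injective v ∧ ∀ i ∉ g.strategic, v i = g.loc i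

/-- The number of friends of `i` occupying nodes adjacent to `v i`. -/
noncomputable def fcount (g : SchellingGame A V) (v : A → V) (i : A) : ℕ :=
  Nat.card {j : A // g.net.Adj i j ∧ g.top.Adj (v i) (v j)}

/-- The number of enemies of `i` occupying nodes adjacent to `v i`. -/
noncomputable def ecount (g : SchellingGame A V) (v : A → V) (i : A) : ℕ :=
  Nat.card {j : A // j ≠ i ∧ ¬ g.net.Adj i j ∧ g.top.Adj (v i) (v j)}

/-- The utility of agent `i` under assignment `v`: `0` if `i` has no adjacent
friends, and otherwise the fraction of friends among her occupied neighbors. -/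
noncomputable def util (g : SchellingGame A V) (v : A → V) (i : A) : ℚ :=
  if g.fcount v i = 0 then 0
  else (g.fcount v i : ℚ) / ((g.fcount v i : ℚ) + (g.ecount v i : ℚ))

/-- An assignment is an equilibrium if no strategic agent can strictly increase
her utility by relocating to an unoccupied node. -/
def IsEquilibrium (g : SchellingGame A V) (v : A → V) : Prop :=
  g.IsAssignment v ∧ ∀ i ∈ g.strategic, ∀ z : V, (∀ j : A, v j ≠ z) →
    g.util (Function.update v i z) i ≤ g.util v i

/-- The social welfare: the total utility of the strategic agents. -/
noncomputable def SW (g : SchellingGame A V) (v : A → V) : ℚ :=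
  ∑ i ∈ g.strategic, g.util v i

/-- `g` is a `k`-typed Schelling game with type map `typ`: two distinct agents are
friends iff they have the same type, and every type is nonempty. -/
def IsTypedGame (g : SchellingGame A V) (k : ℕ) (typ : A → Fin k) : Prop :=
  (∀ i j : A, g.net.Adj i j ↔ (i ≠ j ∧ typ i = typ j)) ∧ ∀ c : Fin k, ∃ i : A, typ i = c

end SchellingGame

/-- A star graph: one center node adjacent to all other nodes, and no other edges. -/
def IsStar {V : Type} (G : SimpleGraph V) : Prop :=
  ∃ c : V, ∀ a b : V, G.Adj a b ↔ (a ≠ b ∧ (a = c ∨ b = c))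

/-
Two strategic agents of the same type do best as a pair, one on a hub and one on a leaf attached to
it: the agent on the leaf, whose only neighbour is her friend, has utility `1`. But the hub is
surrounded by `m + 1` enemies, so the agent on it prefers a refuge, where she meets one friend and
`m` enemies. Hence the pair is unstable, in every equilibrium both strategic agents have utility
`1 / (m + 1)`, and the price of stability is at least `(m + 1) / 2`, which is unbounded.
-/

namespace SchellingGame

variable {A B V W : Type}

theorem util_eq_div (g : SchellingGame A V) (v : A → V) (i : A) :
    g.util v i = (g.fcount v i : ℚ) / ((g.fcount v i : ℚ) + (g.ecount v i : ℚ)) := by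
  rw [util, ite_eq_right_iff]
  intro h
  simp [h]

theorem util_nonneg (g : SchellingGame A V) (v : A → V) (i : A) : 0 ≤ g.util v i := by
  rw [util_eq_div]
  positivity

theorem IsAssignment.update [DecidableEq A] {g : SchellingGame A V} {v : A → V} {i : A}
    (hv : g.IsAssignment v) (hi : i ∈ g.strategic) {z : V} (hz : ∀ j, v j ≠ z) :
    g.IsAssignment (Function.update v i z) := by
  refine ⟨fun j l hjl => ?_, fun j hj => ?_⟩
  · rw [Function.update_apply, Function.update_apply] at hjl
    split_ifs at hjl with hj hl hl
    · rw [hj, hl]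
    · exact absurd hjl.symm (hz l)
    · exact absurd hjl (hz j)
    · exact hv.1 hjl
  · rw [Function.update_of_ne (ne_of_mem_of_not_mem hi hj).symm]
    exact hv.2 j hj

/-- The game `g` with its agents and locations relabelled. The equivalences go from the new labels
to the old ones, so that both graphs are pulled back. -/
def reindex (g : SchellingGame A V) (eA : B ≃ A) (eV : W ≃ V) : SchellingGame B W where
  strategic := g.strategic.map eA.symm.toEmbedding
  net := g.net.comap eA
  top := g.top.comap eV
  loc i := eV.symm (g.loc (eA i))

theorem mem_strategic_reindex {g : SchellingGame A V} {eA : B ≃ A} {eV : W ≃ V} {i : B} :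
    i ∈ (g.reindex eA eV).strategic ↔ eA i ∈ g.strategic := by
  simp [reindex]

theorem IsTypedGame.reindex {g : SchellingGame A V} {k : ℕ} {typ : A → Fin k}
    (h : g.IsTypedGame k typ) (eA : B ≃ A) (eV : W ≃ V) :
    (g.reindex eA eV).IsTypedGame k (typ ∘ eA) := by
  refine ⟨fun i j => ?_, fun c => ?_⟩
  · simp [SchellingGame.reindex, h.1]
  · obtain ⟨i, hi⟩ := h.2 c
    exact ⟨eA.symm i, by simpa using hi⟩

theorem card_stubborn_reindex {T : Type} (g : SchellingGame A V) (eA : B ≃ A) (eV : W ≃ V)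
    (typ : A → T) (c : T) :
    Nat.card {i // (typ ∘ eA) i = c ∧ i ∉ (g.reindex eA eV).strategic} =
      Nat.card {i // typ i = c ∧ i ∉ g.strategic} :=
  Nat.card_congr (eA.subtypeEquiv fun i => by simp [mem_strategic_reindex])

theorem WellFormed.reindex [Fintype A] [DecidableEq A] [Fintype V] [Fintype B] [DecidableEq B]
    [Fintype W] {g : SchellingGame A V} (h : g.WellFormed) (eA : B ≃ A) (eV : W ≃ V) :
    (g.reindex eA eV).WellFormed := by
  refine ⟨?_, ?_, fun i hi j hj hij => ?_⟩
  · rw [Fintype.card_congr eA]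
    exact h.1
  · rw [Fintype.card_congr eA, Fintype.card_congr eV]
    exact h.2.1
  · simp only [Finset.coe_compl, Set.mem_compl_iff, Finset.mem_coe,
      mem_strategic_reindex] at hi hj
    exact eA.injective (h.2.2 (by simpa using hi) (by simpa using hj) (eV.symm.injective hij))

variable (g : SchellingGame A V) (eA : B ≃ A) (eV : W ≃ V) (v : B → W)

theorem isAssignment_reindex :
    (g.reindex eA eV).IsAssignment v ↔ g.IsAssignment (eA.arrowCongr eV v) := by
  simp [IsAssignment, reindex, Equiv.arrowCongr, eA.symm.forall_congr_left, Equiv.eq_symm_apply]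

theorem util_reindex (i : B) :
    (g.reindex eA eV).util v i = g.util (eA.arrowCongr eV v) (eA i) := by
  have hf : (g.reindex eA eV).fcount v i = g.fcount (eA.arrowCongr eV v) (eA i) :=
    Nat.card_congr (eA.subtypeEquiv fun j => by simp [reindex])
  have he : (g.reindex eA eV).ecount v i = g.ecount (eA.arrowCongr eV v) (eA i) :=
    Nat.card_congr (eA.subtypeEquiv fun j => by simp [reindex])
  rw [util, util, hf, he]

theorem SW_reindex : (g.reindex eA eV).SW v = g.SW (eA.arrowCongr eV v) := by
  simp only [SW, util_reindex]
  simp [reindex]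

theorem isEquilibrium_reindex [DecidableEq A] [DecidableEq B] :
    (g.reindex eA eV).IsEquilibrium v ↔ g.IsEquilibrium (eA.arrowCongr eV v) := by
  have update_eq (i : B) (z : W) : eA.arrowCongr eV (Function.update v i z) =
      Function.update (eA.arrowCongr eV v) (eA i) (eV z) := by
    ext j
    by_cases h : j = eA i <;> simp [Equiv.symm_apply_eq, h]
  refine and_congr (isAssignment_reindex g eA eV v) (eA.forall_congr fun i => ?_)
  refine imp_congr mem_strategic_reindex (eV.forall_congr fun z => ?_)
  refine imp_congr (eA.forall_congr fun j => ?_) ?_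
  · simp
  · rw [util_reindex, util_reindex, update_eq]

end SchellingGame

namespace RefugeGame

/-- The agents of the refuge game: two strategic ones, and `m + 1` stubborn ones of each type. -/
inductive Agent (T : Type) (m : ℕ) : Type
  | mover (p : Fin 2)
  | stubborn (t : T) (i : Fin (m + 1))
  deriving DecidableEq, Fintype

/-- The locations of the refuge game; `home t i` is the preferred location of `stubborn t i`. -/
inductive Node (T : Type) (m : ℕ) : Type
  | hub
  | leaf
  | refuge (r : Fin 2)
  | home (t : T) (i : Fin (m + 1))
  deriving Fintype

open Agent Node SchellingGame

variable {T : Type} {m : ℕ}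

/-- The type of an agent, where both strategic agents have type `a`. -/
def kind (a : T) : Agent T m → T
  | mover _ => a
  | stubborn t _ => t

/-- The edges of the topology, each listed in one direction only: the hub is joined to the leaf and
to all homes of type `b`, each refuge to the home of index `0` of type `a` and to all other homes
of type `b`. -/
def Link (a b : T) : Node T m → Node T m → Prop
  | hub, leaf => True
  | hub, home t _ => t = b
  | refuge _, home t i => t = a ∧ i = 0 ∨ t = b ∧ i ≠ 0
  | _, _ => False

/-- The assignment which places both strategic agents on refuges. -/
def refuged : Agent T m → Node T m
  | mover p => refuge p
  | stubborn t i => home t i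

/-- The assignment which places the strategic agents next to each other, on the hub and the leaf. -/
def paired : Agent T m → Node T m
  | mover p => if p = 0 then hub else leaf
  | stubborn t i => home t i

theorem mover_injective : Function.Injective (mover : Fin 2 → Agent T m) :=
  fun _ _ => mover.inj

theorem stubborn_injective (t : T) :
    Function.Injective (stubborn t : Fin (m + 1) → Agent T m) :=
  fun _ _ h => (stubborn.inj h).2

theorem refuged_injective : Function.Injective (refuged : Agent T m → Node T m) := by
  rintro (p | ⟨t, i⟩) (q | ⟨s, j⟩) h <;> simp_all [refuged]

theorem paired_injective : Function.Injective (paired : Agent T m → Node T m) := by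
  rintro (p | ⟨t, i⟩) (q | ⟨s, j⟩) h
  · fin_cases p <;> fin_cases q <;> simp_all [paired]
  · fin_cases p <;> simp [paired] at h
  · fin_cases q <;> simp [paired] at h
  · simpa [paired] using h

theorem refuged_ne_hub (i : Agent T m) : refuged i ≠ hub := by
  cases i <;> simp [refuged]

/-- The refuge game with its two strategic agents of type `a`, whose enemies on the topology have
type `b`. Only the values of `loc` at stubborn agents matter. -/
def game (m : ℕ) (a b : T) : SchellingGame (Agent T m) (Node T m) where
  strategic := Finset.univ.map ⟨mover, mover_injective⟩
  net := SimpleGraph.fromRel fun i j => kind a i = kind a j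
  top := SimpleGraph.fromRel (Link a b)
  loc := refuged

variable {a b : T} {v : Agent T m → Node T m} {p : Fin 2}

theorem mem_strategic_iff {j : Agent T m} :
    j ∈ (game m a b).strategic ↔ ∃ p, j = mover p := by
  simp [game, eq_comm]

theorem notMem_strategic_iff {j : Agent T m} :
    j ∉ (game m a b).strategic ↔ ∃ t i, j = stubborn t i := by
  cases j <;> simp [mem_strategic_iff]

theorem net_adj {i j : Agent T m} :
    (game m a b).net.Adj i j ↔ i ≠ j ∧ kind a i = kind a j := by
  simp [game, eq_comm]

theorem isTypedGame_game {k : ℕ} (a b : Fin k) : (game m a b).IsTypedGame k (kind a) :=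
  ⟨fun _ _ => net_adj, fun c => ⟨stubborn c 0, rfl⟩⟩

theorem top_adj_hub {x : Node T m} :
    (game m a b).top.Adj hub x ↔ x = leaf ∨ ∃ i, x = home b i := by
  cases x <;> simp [game, Link]

theorem top_adj_leaf {x : Node T m} : (game m a b).top.Adj leaf x ↔ x = hub := by
  cases x <;> simp [game, Link]

theorem top_adj_refuge {r : Fin 2} {x : Node T m} :
    (game m a b).top.Adj (refuge r) x ↔ x = home a 0 ∨ ∃ i : Fin m, x = home b i.succ := by
  cases x with
  | home t i => cases i using Fin.cases <;> simp [game, Link, eq_comm]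
  | _ => simp [game, Link]

theorem card_stubborn (c : T) :
    Nat.card {i // kind a i = c ∧ i ∉ (game m a b).strategic} = m + 1 := by
  have mem_range_iff (i : Agent T m) : (kind a i = c ∧ i ∉ (game m a b).strategic) ↔
      i ∈ Set.range (stubborn c) := by
    cases i <;> simp [mem_strategic_iff, kind, eq_comm]
  simp only [mem_range_iff]
  exact (Nat.card_range_of_injective (stubborn_injective c)).trans (Nat.card_fin _)

theorem isAssignment_iff : (game m a b).IsAssignment v ↔
    Function.Injective v ∧ ∀ t i, v (stubborn t i) = home t i := by
  simp only [IsAssignment, notMem_strategic_iff]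
  exact and_congr_right' ⟨fun h t i => h _ ⟨t, i, rfl⟩, by rintro h _ ⟨t, i, rfl⟩; exact h t i⟩

theorem isAssignment_refuged : (game m a b).IsAssignment refuged :=
  isAssignment_iff.2 ⟨refuged_injective, fun _ _ => rfl⟩

theorem isAssignment_paired : (game m a b).IsAssignment paired :=
  isAssignment_iff.2 ⟨paired_injective, fun _ _ => rfl⟩

theorem eq_home_iff (hv : (game m a b).IsAssignment v) {j : Agent T m} {t : T}
    {i : Fin (m + 1)} : v j = home t i ↔ j = stubborn t i := by
  obtain ⟨inj, home_eq⟩ := isAssignment_iff.1 hv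
  rw [← home_eq, inj.eq_iff]

theorem wellFormed_game [Fintype T] [DecidableEq T] : (game m a b).WellFormed := by
  refine ⟨?_, ?_, refuged_injective.injOn⟩
  · have : Nontrivial (Agent T m) := ⟨mover 0, mover 1, by simp⟩
    exact Fintype.one_lt_card
  · refine Fintype.card_lt_of_injective_of_notMem refuged refuged_injective (b := hub) ?_
    rintro ⟨i, hi⟩
    exact refuged_ne_hub i hi

theorem SW_game : (game m a b).SW v = ∑ p, (game m a b).util v (mover p) :=
  Finset.sum_map ..

theorem fcount_refuge (hab : a ≠ b) (hv : (game m a b).IsAssignment v) {r : Fin 2}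
    (hr : v (mover p) = refuge r) : (game m a b).fcount v (mover p) = 1 := by
  have friend_iff (j : Agent T m) : ((game m a b).net.Adj (mover p) j ∧
      (game m a b).top.Adj (v (mover p)) (v j)) ↔ j = stubborn a 0 := by
    simp only [hr, top_adj_refuge, eq_home_iff hv, net_adj]
    grind [kind]
  simp [fcount, friend_iff]

theorem ecount_refuge (hab : a ≠ b) (hv : (game m a b).IsAssignment v) {r : Fin 2}
    (hr : v (mover p) = refuge r) : (game m a b).ecount v (mover p) = m := by
  have enemy_iff (j : Agent T m) : (j ≠ mover p ∧ ¬ (game m a b).net.Adj (mover p) j ∧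
      (game m a b).top.Adj (v (mover p)) (v j)) ↔
      j ∈ Set.range fun i : Fin m => stubborn b i.succ := by
    simp only [hr, top_adj_refuge, eq_home_iff hv, net_adj, Set.mem_range]
    grind [kind]
  simp only [ecount, enemy_iff]
  exact (Nat.card_range_of_injective
    ((stubborn_injective b).comp (Fin.succ_injective m))).trans (Nat.card_fin m)

theorem util_refuge (hab : a ≠ b) (hv : (game m a b).IsAssignment v) {r : Fin 2}
    (hr : v (mover p) = refuge r) : (game m a b).util v (mover p) = 1 / (m + 1) := by
  rw [util_eq_div, fcount_refuge hab hv hr, ecount_refuge hab hv hr, Nat.cast_one,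
    add_comm (1 : ℚ)]

theorem fcount_hub_le_one (hab : a ≠ b) (hv : (game m a b).IsAssignment v)
    (hp : v (mover p) = hub) : (game m a b).fcount v (mover p) ≤ 1 := by
  have on_leaf (j : Agent T m) (h : (game m a b).net.Adj (mover p) j ∧
      (game m a b).top.Adj (v (mover p)) (v j)) : v j = leaf := by
    simp only [hp, top_adj_hub, eq_home_iff hv, net_adj] at h
    grind [kind]
  have : Subsingleton {j // (game m a b).net.Adj (mover p) j ∧
      (game m a b).top.Adj (v (mover p)) (v j)} :=
    ⟨fun i j => Subtype.ext (hv.1 ((on_leaf i i.2).trans (on_leaf j j.2).symm))⟩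
  exact Finite.card_le_one_iff_subsingleton.2 this

theorem ecount_hub (hab : a ≠ b) (hv : (game m a b).IsAssignment v)
    (hp : v (mover p) = hub) : (game m a b).ecount v (mover p) = m + 1 := by
  have enemy_iff (j : Agent T m) : (j ≠ mover p ∧ ¬ (game m a b).net.Adj (mover p) j ∧
      (game m a b).top.Adj (v (mover p)) (v j)) ↔ j ∈ Set.range (stubborn b) := by
    have stubborn_home := (isAssignment_iff.1 hv).2
    simp only [hp, top_adj_hub, eq_home_iff hv, net_adj, Set.mem_range]
    cases j <;> grind [kind]
  simp only [ecount, enemy_iff]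
  exact (Nat.card_range_of_injective (stubborn_injective b)).trans (Nat.card_fin _)

theorem util_hub_lt (hab : a ≠ b) (hv : (game m a b).IsAssignment v)
    (hp : v (mover p) = hub) : (game m a b).util v (mover p) < 1 / (m + 1) := by
  have friends_le := fcount_hub_le_one hab hv hp
  rw [util_eq_div, ecount_hub hab hv hp, div_lt_div_iff₀ (by positivity) (by positivity)]
  norm_cast
  nlinarith

theorem util_leaf_of_hub_free (hp : v (mover p) = leaf) (hub_free : ∀ j, v j ≠ hub) :
    (game m a b).util v (mover p) = 0 := by
  simp [util, fcount, hp, top_adj_leaf, hub_free]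

theorem util_leaf_of_hub (hv : (game m a b).IsAssignment v) {q : Fin 2}
    (hp : v (mover p) = leaf) (hq : v (mover q) = hub) :
    (game m a b).util v (mover p) = 1 := by
  have on_hub_iff (j : Agent T m) : v j = hub ↔ j = mover q := by rw [← hq, hv.1.eq_iff]
  have hpq : mover q ≠ (mover p : Agent T m) := fun h => by simp [← h, hq] at hp
  have hf : (game m a b).fcount v (mover p) = 1 := by
    have friend_iff (j : Agent T m) : ((game m a b).net.Adj (mover p) j ∧
        (game m a b).top.Adj (v (mover p)) (v j)) ↔ j = mover q := by
      simp only [hp, top_adj_leaf, on_hub_iff, net_adj]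
      grind [kind]
    simp [fcount, friend_iff]
  have he : (game m a b).ecount v (mover p) = 0 := by
    have no_enemy (j : Agent T m) : ¬ (j ≠ mover p ∧ ¬ (game m a b).net.Adj (mover p) j ∧
        (game m a b).top.Adj (v (mover p)) (v j)) := by
      simp only [hp, top_adj_leaf, on_hub_iff, net_adj]
      grind [kind]
    simp [ecount, no_enemy]
  simp [util_eq_div, hf, he]

theorem util_mover_le (hab : a ≠ b) (hv : (game m a b).IsAssignment v)
    (unpaired : v (mover p) = leaf → ∀ j, v j ≠ hub) :
    (game m a b).util v (mover p) ≤ 1 / (m + 1) := by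
  cases hp : v (mover p) with
  | hub => exact (util_hub_lt hab hv hp).le
  | leaf =>
    rw [util_leaf_of_hub_free hp (unpaired hp)]
    positivity
  | refuge r => exact (util_refuge hab hv hp).le
  | home t i => simp [eq_home_iff hv] at hp

theorem exists_free_refuge (hv : (game m a b).IsAssignment v)
    (hp : ∀ r, v (mover p) ≠ refuge r) : ∃ r, ∀ j, v j ≠ refuge r := by
  by_contra! occupied
  have occupied_by_mover (r : Fin 2) : ∃ q, v (mover q) = refuge r := by
    obtain ⟨q | ⟨t, i⟩, h⟩ := occupied r
    · exact ⟨q, h⟩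
    · simp [(isAssignment_iff.1 hv).2] at h
  choose occupant h_occ using occupied_by_mover
  have inj : Function.Injective occupant := fun r s hrs => by
    simpa [h_occ] using congrArg (fun q => v (mover q)) hrs
  obtain ⟨r, hr⟩ := Finite.surjective_of_injective inj p
  exact hp r (hr ▸ h_occ r)

theorem one_le_SW_paired : 1 ≤ (game m a b).SW paired := by
  rw [SW_game, Fin.sum_univ_two,
    util_leaf_of_hub isAssignment_paired (p := 1) (q := 0) rfl rfl]
  exact le_add_of_nonneg_left (util_nonneg ..)

variable [DecidableEq T]

theorem isEquilibrium_refuged (hab : a ≠ b) : (game m a b).IsEquilibrium refuged := by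
  refine ⟨isAssignment_refuged, fun i hi z hz => ?_⟩
  obtain ⟨p, rfl⟩ := mem_strategic_iff.1 hi
  rw [util_refuge hab isAssignment_refuged (p := p) rfl]
  refine util_mover_le hab (isAssignment_refuged.update hi hz) fun on_leaf j => ?_
  rcases eq_or_ne j (mover p) with rfl | hj
  · exact on_leaf.trans_ne (by simp)
  · rw [Function.update_of_ne hj]
    exact refuged_ne_hub j

theorem le_util_of_isEquilibrium (hab : a ≠ b) (hv : (game m a b).IsEquilibrium v) :
    1 / (m + 1) ≤ (game m a b).util v (mover p) := by
  by_cases hp : ∃ r, v (mover p) = refuge r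
  · obtain ⟨r, hr⟩ := hp
    exact (util_refuge hab hv.1 hr).ge
  · obtain ⟨r, hr⟩ := exists_free_refuge hv.1 (not_exists.1 hp)
    have hp_mem : mover p ∈ (game m a b).strategic := mem_strategic_iff.2 ⟨p, rfl⟩
    rw [← util_refuge hab (hv.1.update hp_mem hr) (Function.update_self ..)]
    exact hv.2 _ hp_mem _ hr

theorem hub_free_of_isEquilibrium (hab : a ≠ b) (hv : (game m a b).IsEquilibrium v)
    (j : Agent T m) : v j ≠ hub := by
  intro hj
  cases j with
  | mover p => exact (util_hub_lt hab hv.1 hj).not_ge (le_util_of_isEquilibrium hab hv)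
  | stubborn t i => simp [(isAssignment_iff.1 hv.1).2] at hj

theorem util_of_isEquilibrium (hab : a ≠ b) (hv : (game m a b).IsEquilibrium v) (p : Fin 2) :
    (game m a b).util v (mover p) = 1 / (m + 1) :=
  (util_mover_le hab hv.1 fun _ => hub_free_of_isEquilibrium hab hv).antisymm
    (le_util_of_isEquilibrium hab hv)

theorem SW_of_isEquilibrium (hab : a ≠ b) (hv : (game m a b).IsEquilibrium v) :
    (game m a b).SW v = 2 / (m + 1) := by
  simp only [SW_game, util_of_isEquilibrium hab hv, Fin.sum_univ_two]
  ring

end RefugeGame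

open RefugeGame SchellingGame in
theorem stmt16_general (k : ℕ) (hk : 2 ≤ k) (C : ℚ) :
    ∃ (nA nV : ℕ) (g : SchellingGame (Fin nA) (Fin nV)) (typ : Fin nA → Fin k),
      g.WellFormed ∧ g.IsTypedGame k typ ∧
      (∀ c c' : Fin k, Nat.card {i // typ i = c ∧ i ∉ g.strategic} =
        Nat.card {i // typ i = c' ∧ i ∉ g.strategic}) ∧
      (∃ v, g.IsEquilibrium v) ∧
      (∃ w, g.IsAssignment w ∧ ∀ v, g.IsEquilibrium v → 0 < g.SW v ∧ C * g.SW v ≤ g.SW w) := by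
  obtain ⟨m, hm⟩ := exists_nat_ge (2 * C)
  let a : Fin k := ⟨0, by omega⟩
  let b : Fin k := ⟨1, by omega⟩
  have hab : a ≠ b := by simp [a, b]
  let eA := (Fintype.equivFin (Agent (Fin k) m)).symm
  let eV := (Fintype.equivFin (Node (Fin k) m)).symm
  refine ⟨_, _, (game m a b).reindex eA eV, kind a ∘ eA, wellFormed_game.reindex eA eV,
    (isTypedGame_game a b).reindex eA eV, fun c c' => ?_,
    ⟨(eA.arrowCongr eV).symm refuged, ?_⟩, (eA.arrowCongr eV).symm paired, ?_, fun v hv => ?_⟩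
  · simp only [card_stubborn_reindex, card_stubborn]
  · rw [isEquilibrium_reindex, Equiv.apply_symm_apply]
    exact isEquilibrium_refuged hab
  · rw [isAssignment_reindex, Equiv.apply_symm_apply]
    exact isAssignment_paired
  · rw [isEquilibrium_reindex] at hv
    rw [SW_reindex, SW_reindex, Equiv.apply_symm_apply,
      SW_of_isEquilibrium hab hv]
    refine ⟨by positivity, le_trans ?_ one_le_SW_paired⟩
    rw [mul_div_assoc', div_le_one (by positivity)]
    linarith

/-- for every even k ≥ 2 and every ε > 0 there is a k-typed Schelling
game in which every type has the same number of stubborn agents, admitting an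
equilibrium, together with an assignment v* whose social welfare is at least (3 - ε)
times the social welfare of every equilibrium; hence the price of stability of such
games is at least 3. -/
theorem stmt16 (k : ℕ) (hk : 2 ≤ k) (hkEven : Even k) (eps : ℚ) (heps : 0 < eps) :
    ∃ (nA nV : ℕ) (g : SchellingGame (Fin nA) (Fin nV)) (typ : Fin nA → Fin k),
      g.WellFormed ∧ g.IsTypedGame k typ ∧
      (∀ c c' : Fin k, Nat.card {i // typ i = c ∧ i ∉ g.strategic} =
        Nat.card {i // typ i = c' ∧ i ∉ g.strategic}) ∧
      (∃ v, g.IsEquilibrium v) ∧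
      (∃ w, g.IsAssignment w ∧ ∀ v, g.IsEquilibrium v → (3 - eps) * g.SW v ≤ g.SW w) := by
  obtain ⟨nA, nV, g, typ, hwf, htyp, hcard, heq, w, hw, hSW⟩ := stmt16_general k hk 3
  exact ⟨nA, nV, g, typ, hwf, htyp, hcard, heq, w, hw, fun v hv => by
    nlinarith [mul_pos heps (hSW v hv).1, (hSW v hv).2]⟩
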